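/- arXiv:1603.02863 — 2 statements merged into one kernel-verified Lean document; each statement's English description precedes it below -/
import Mathlib

section
/- Let f > 0 be rational and Δ a positive integer with fΔ ∈ ℕ. For n with fn ∈ ℕ, let G be the random bipartite multigraph with n left vertices of degree fΔ and fn right vertices of degree Δ determined by a uniformly random bijection between left sockets and right sockets. If D ≥ 1 and Δ > max{ (1 + 1/f)·(1 − D·h(1/D)/((D+1)·h(1/(D+1))))^{−1}, D² + 1/f, D²/f + 1 }, then the probability that G is not D-good tends to 0 as n → ∞ (n ranging over integers with fn ∈ ℕ). -/
/-!
The proof is a first-moment argument.  By the symmetry `f ↦ 1 / f`, `n ↔ r`, `a ↔ Δ` it suffices to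
treat expansion from left to right (`DGoodRL_of_symm`).  If some `S` with `s` elements fails to
expand, then `N(S) ⊆ T` for some `T` of size `t = ⌈f D s⌉ - 1`, and a union bound over such pairs
gives probability at most
`∑ s, C(n, s) C(r, t) C(tΔ, sa) / C(na, sa)` (`ncard_not_DGoodLR_le`).

Entropy estimates for the binomial coefficients bound the `s`-th summand by
`const * s * exp (-n * rate (s / n))` (`pairBound_le`), where, with `H` the binary entropy,
`rate θ = (a - 1) H(θ) - f H(Dθ) - a D H(1/D) θ`.
The lower bound used for `C(na, sa)` loses only a factor linear in `s`, independently of `n`.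

The condition `Δ > D² + 1/f` makes `rate` concave on `[0, 1/(D+1)]` (`concaveOn_rate`), and the
entropy condition on `Δ` says that it is positive at the right endpoint (`rate_endpoint_pos`).  As
`rate 0 = 0`, concavity yields `rate θ ≥ c θ` with `c > 0`, so the summands are dominated by the
summable sequence `const * s * exp (-c s)`.  For fixed `s` the summand tends to `0`, because
`rate θ / θ → ∞` as `θ → 0` (`rate_ge_log`).  Dominated convergence for series
(`tendsto_tsum_summandBound`) shows that the union bound tends to `0`.
The condition `Δ > D²/f + 1` plays the role of `Δ > D² + 1/f` for the transposed graph.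
-/

open Filter

/-- The binary entropy function `h(θ) = −θ·log₂θ − (1−θ)·log₂(1−θ)` (with `h(1) = 0`). -/
noncomputable def binEnt (θ : ℝ) : ℝ :=
  -(θ * Real.logb 2 θ) - (1 - θ) * Real.logb 2 (1 - θ)

/-- In the socket model, the left vertex `u` (with `a` sockets per left vertex) and the right
vertex `v` (with `Δ` sockets per right vertex) are adjacent in the bipartite multigraph
determined by the socket bijection `π`. -/
def socketAdj {N M : ℕ} (a Δ : ℕ) (π : Fin N ≃ Fin M) (u v : ℕ) : Prop :=
  ∃ k : Fin N, (k : ℕ) / a = u ∧ ((π k : ℕ)) / Δ = v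

/-- `D`-goodness from left to right: every set `S` of left vertices with `|S| ≤ n/(D+1)`
satisfies `|N(S)| ≥ fD|S|`. -/
def DGoodLR (n r a Δ : ℕ) (f D : ℝ) (π : Fin (n * a) ≃ Fin (r * Δ)) : Prop :=
  ∀ S : Set ℕ, (∀ u ∈ S, u < n) → (S.ncard : ℝ) ≤ (n : ℝ) / (D + 1) →
    f * D * (S.ncard : ℝ) ≤
      (Set.ncard {v : ℕ | v < r ∧ ∃ u ∈ S, socketAdj a Δ π u v} : ℝ)

/-- `D`-goodness from right to left: every set `T` of right vertices with `|T| ≤ fn/(D+1)`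
satisfies `|N(T)| ≥ (D/f)|T|`. -/
def DGoodRL (n r a Δ : ℕ) (f D : ℝ) (π : Fin (n * a) ≃ Fin (r * Δ)) : Prop :=
  ∀ T : Set ℕ, (∀ v ∈ T, v < r) → (T.ncard : ℝ) ≤ f * (n : ℝ) / (D + 1) →
    D * (T.ncard : ℝ) / f ≤
      (Set.ncard {u : ℕ | u < n ∧ ∃ v ∈ T, socketAdj a Δ π u v} : ℝ)

/-- A graph is `D`-good if it is `D`-good both from left to right and from right to left. -/
def DGood (n r a Δ : ℕ) (f D : ℝ) (π : Fin (n * a) ≃ Fin (r * Δ)) : Prop :=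
  DGoodLR n r a Δ f D π ∧ DGoodRL n r a Δ f D π

/-! ### Entropy bounds for binomial coefficients -/

/-- Monotonicity of `n! * e ^ n / n ^ n`, in logarithmic form. -/
lemma log_factorial_sub_ge {m N : ℕ} (h : m ≤ N) :
    (N * Real.log N - m * Real.log m) - (N - m) ≤
      Real.log (N.factorial) - Real.log (m.factorial) := by
  induction N, h using Nat.le_induction with
  | base => simp
  | succ k hk ih =>
    have hk0 : (0 : ℝ) < (k.factorial : ℝ) := by exact_mod_cast k.factorial_pos
    have h1 : Real.log ((k + 1).factorial) = Real.log (k + 1 : ℝ) + Real.log k.factorial := by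
      rw [Nat.factorial_succ]; push_cast
      rw [Real.log_mul (by positivity) hk0.ne']
    have h2 : (k : ℝ) * (Real.log (k + 1) - Real.log k) ≤ 1 := by
      rcases Nat.eq_zero_or_pos k with rfl | hkp
      · simp
      · have hkr : (0 : ℝ) < k := by exact_mod_cast hkp
        rw [← Real.log_div (by positivity) hkr.ne']
        have := Real.log_le_sub_one_of_pos (x := ((k : ℝ) + 1) / k) (by positivity)
        calc (k : ℝ) * Real.log ((k + 1) / k) ≤ k * ((k + 1) / k - 1) := by gcongr
          _ = 1 := by field_simp; ring
    rw [h1]; push_cast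
    linarith

/-- Monotonicity of `k! * e ^ k / k ^ (k + 1)` (it decreases from `e`), in logarithmic form. -/
lemma log_factorial_le {k : ℕ} (h : 1 ≤ k) :
    Real.log (k.factorial) ≤ k * Real.log k - k + 1 + Real.log k := by
  induction k, h using Nat.le_induction with
  | base => simp
  | succ k hk ih =>
    have hk0 : (0 : ℝ) < (k.factorial : ℝ) := by exact_mod_cast k.factorial_pos
    have hkr : (0 : ℝ) < k := by exact_mod_cast hk
    have h1 : Real.log ((k + 1).factorial) = Real.log (k + 1 : ℝ) + Real.log k.factorial := by
      rw [Nat.factorial_succ]; push_cast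
      rw [Real.log_mul (by positivity) hk0.ne']
    have h2 : ((k : ℝ) + 1) * (Real.log k - Real.log (k + 1)) ≤ -1 := by
      rw [← Real.log_div hkr.ne' (by positivity)]
      have := Real.log_le_sub_one_of_pos (x := (k : ℝ) / (k + 1)) (by positivity)
      calc ((k : ℝ) + 1) * Real.log (k / (k + 1)) ≤ (k + 1) * (k / (k + 1) - 1) := by gcongr
        _ = -1 := by field_simp; ring
    rw [h1]; push_cast
    linarith

/-- Entropy lower bound for binomial coefficients.  The loss factor `e * k` depends on `k` only,
not on `N`, which is what makes the union bound summable uniformly in the number of vertices. -/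
lemma exp_entropy_le_choose {N k : ℕ} (hk : 1 ≤ k) (hkN : k < N) :
    Real.exp (N * Real.binEntropy ((k : ℝ) / N)) ≤
      Real.exp 1 * k * (N.choose k : ℝ) := by
  have hkr : (0 : ℝ) < k := by exact_mod_cast hk
  have hkN' : (k : ℝ) < N := by exact_mod_cast hkN
  have hN : (0 : ℝ) < N := hkr.trans hkN'
  have hc : (0 : ℝ) < (N.choose k : ℝ) := by exact_mod_cast Nat.choose_pos hkN.le
  have h1 := log_factorial_sub_ge (Nat.sub_le N k)
  have h2 := log_factorial_le hk
  have h3 : Real.log (N.factorial) = Real.log (N.choose k) + Real.log k.factorial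
      + Real.log (N - k).factorial := by
    have e := Nat.choose_mul_factorial_mul_factorial hkN.le
    have h5 : (0 : ℝ) < (k.factorial : ℝ) := by exact_mod_cast k.factorial_pos
    have h6 : (0 : ℝ) < ((N - k).factorial : ℝ) := by exact_mod_cast (N - k).factorial_pos
    rw [← e]; push_cast
    rw [Real.log_mul (by positivity) h6.ne', Real.log_mul hc.ne' h5.ne']
  rw [Nat.cast_sub hkN.le] at h1
  have h4 : (N : ℝ) * Real.binEntropy ((k : ℝ) / N) =
      N * Real.log N - k * Real.log k - (N - k) * Real.log (N - k) := by
    have : (1 : ℝ) - k / N = (N - k) / N := by field_simp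
    rw [Real.binEntropy, this, Real.log_inv, Real.log_inv, Real.log_div hkr.ne' hN.ne',
      Real.log_div (by linarith) hN.ne']
    field_simp
    ring
  have h7 : Real.exp 1 * k * (N.choose k : ℝ) =
      Real.exp (1 + Real.log k + Real.log (N.choose k)) := by
    rw [Real.exp_add, Real.exp_add, Real.exp_log hkr, Real.exp_log hc]
  rw [h4, h7]
  apply Real.exp_le_exp.2
  linarith

/-- A single term of the binomial expansion of `(p + (1 - p)) ^ m = 1` is at most `1`. -/
lemma choose_le_exp {m k : ℕ} (hk : k ≤ m) {p : ℝ} (hp0 : 0 < p) (hp1 : p < 1) :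
    (m.choose k : ℝ) ≤ Real.exp (-(k * Real.log p + (m - k) * Real.log (1 - p))) := by
  have hq : 0 < 1 - p := by linarith
  have h := add_pow p (1 - p) m
  have h1 : p ^ k * (1 - p) ^ (m - k) * (m.choose k : ℝ) ≤ 1 := by
    rw [show (p + (1 - p)) ^ m = 1 by norm_num] at h
    refine le_of_le_of_eq ?_ h.symm
    exact Finset.single_le_sum (f := fun i => p ^ i * (1 - p) ^ (m - i) * (m.choose i : ℝ))
      (fun i _ => by positivity) (Finset.mem_range.2 (Nat.lt_succ_of_le hk))
  have h2 : p ^ k * (1 - p) ^ (m - k) =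
      Real.exp (k * Real.log p + (m - k) * Real.log (1 - p)) := by
    rw [Real.exp_add, ← Nat.cast_sub hk, mul_comm (k : ℝ), mul_comm ((m - k : ℕ) : ℝ),
      Real.exp_mul, Real.exp_mul, Real.exp_log hp0, Real.exp_log hq, Real.rpow_natCast,
      Real.rpow_natCast]
  rw [h2] at h1
  rw [Real.exp_neg, ← one_div, le_div_iff₀ (Real.exp_pos _)]
  linarith

/-! ### The exponential rate function -/

/-- The exponential rate: up to subexponential factors, the expected number of pairs `(S, T)` of
sets of `θn` left vertices and `Dθfn` right vertices with `N(S) ⊆ T` is at most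
`exp (-n * rate f a D θ)`.  Entropies here are natural-logarithm entropies, and `a` is the left
degree. -/
noncomputable def rate (f a D θ : ℝ) : ℝ :=
  (a - 1) * Real.binEntropy θ - f * Real.binEntropy (D * θ) - a * D * Real.binEntropy (1 / D) * θ

/-- The range `θ ≤ 1 / (D + 1)` is exactly where the second derivative
`-D * (D - 1) * (1 - (D + 1) * θ) / (θ * (1 - θ) * (1 - D * θ))` is nonpositive. -/
lemma concaveOn_sq_mul_binEntropy_sub {D : ℝ} (hD : 1 ≤ D) :
    ConcaveOn ℝ (Set.Icc 0 (1 / (D + 1)))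
      (fun θ => D ^ 2 * Real.binEntropy θ - Real.binEntropy (D * θ)) := by
  have key : ∀ x ∈ Set.Ioo 0 (1 / (D + 1)),
      0 < x ∧ 0 < 1 - x ∧ 0 < D * x ∧ 0 < 1 - D * x ∧ x * (D + 1) < 1 := by
    rintro x ⟨h0, h1⟩
    rw [lt_div_iff₀ (by linarith)] at h1
    have : 0 < D * x := by positivity
    refine ⟨h0, ?_, this, ?_, h1⟩ <;> nlinarith
  refine concaveOn_of_hasDerivWithinAt2_nonpos (convex_Icc _ _)
    (f' := fun θ => D ^ 2 * (Real.log (1 - θ) - Real.log θ)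
      - (Real.log (1 - D * θ) - Real.log (D * θ)) * D)
    (f'' := fun θ => D ^ 2 * (-1 / (1 - θ) - 1 / θ)
      - (-D / (1 - D * θ) - D / (D * θ)) * D) ?_ ?_ ?_ ?_
  · fun_prop
  · intro x hx
    rw [interior_Icc] at hx
    obtain ⟨h0, h1, h2, h3, -⟩ := key x hx
    refine HasDerivAt.hasDerivWithinAt ?_
    have hd : HasDerivAt (fun θ : ℝ => D * θ) D x := by
      simpa using (hasDerivAt_id x).const_mul D
    exact ((Real.hasDerivAt_binEntropy h0.ne' (by linarith)).const_mul _).sub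
      (HasDerivAt.comp x (Real.hasDerivAt_binEntropy h2.ne' (by linarith)) hd)
  · intro x hx
    rw [interior_Icc] at hx
    obtain ⟨h0, h1, h2, h3, -⟩ := key x hx
    refine HasDerivAt.hasDerivWithinAt ?_
    have hd : HasDerivAt (fun θ : ℝ => D * θ) D x := by
      simpa using (hasDerivAt_id x).const_mul D
    exact ((((hasDerivAt_id x).const_sub 1).log h1.ne').sub
      ((hasDerivAt_id x).log h0.ne')).const_mul (D ^ 2) |>.sub
      (((hd.const_sub 1).log h3.ne').sub (hd.log h2.ne') |>.mul_const D)
  · intro x hx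
    rw [interior_Icc] at hx
    obtain ⟨h0, h1, h2, h3, h4⟩ := key x hx
    have hD0 : 0 < D := by linarith
    have e : D ^ 2 * (-1 / (1 - x) - 1 / x) - (-D / (1 - D * x) - D / (D * x)) * D
        = -(D * (D - 1) * (1 - x * (D + 1))) / (x * (1 - x) * (1 - D * x)) := by
      have := h1.ne'
      have := h3.ne'
      field_simp
      ring
    rw [e]
    apply div_nonpos_of_nonpos_of_nonneg
    · have : 0 ≤ D * (D - 1) * (1 - x * (D + 1)) :=
        mul_nonneg (mul_nonneg hD0.le (by linarith)) (by linarith)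
      linarith
    · positivity

lemma concaveOn_rate {f a D : ℝ} (hf : 0 < f) (hD : 1 ≤ D) (ha : f * D ^ 2 + 1 ≤ a) :
    ConcaveOn ℝ (Set.Icc 0 (1 / (D + 1))) (rate f a D) := by
  have hsub : Set.Icc 0 (1 / (D + 1)) ⊆ Set.Icc (0 : ℝ) 1 := by
    apply Set.Icc_subset_Icc le_rfl
    rw [div_le_one (by linarith)]; linarith
  have h1 := (Real.strictConcave_binEntropy.concaveOn.subset hsub (convex_Icc _ _)).smul
    (c := a - 1 - f * D ^ 2) (by linarith)
  have h2 := (concaveOn_sq_mul_binEntropy_sub hD).smul hf.le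
  have h3 : ConcaveOn ℝ (Set.Icc 0 (1 / (D + 1)))
      (fun θ : ℝ => (-(a * D * Real.binEntropy (1 / D))) • θ) :=
    ⟨convex_Icc _ _, fun x _ y _ s t _ _ _ => le_of_eq (by simp only [smul_eq_mul]; ring)⟩
  refine ((h1.add h2).add h3).congr ?_
  intro θ _
  simp only [rate, Pi.add_apply, smul_eq_mul]
  ring

lemma mul_binEntropy_inv {x : ℝ} (hx : 1 ≤ x) :
    x * Real.binEntropy (1 / x) = x * Real.log x - (x - 1) * Real.log (x - 1) := by
  have hx0 : 0 < x := by linarith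
  rcases hx.eq_or_lt with rfl | h
  · simp
  · have : 1 - 1 / x = (x - 1) / x := by field_simp
    rw [Real.binEntropy, this, Real.log_inv, Real.log_inv, Real.log_div one_ne_zero hx0.ne',
      Real.log_div (by linarith) hx0.ne', Real.log_one]
    field_simp
    ring

/-- Convexity of `x * log x` makes `x * H(1/x)` strictly increasing; hence the expression inverted
in the hypothesis on `Δ` is positive. -/
lemma mul_binEntropy_inv_lt {D : ℝ} (hD : 1 ≤ D) :
    D * Real.binEntropy (1 / D) < (D + 1) * Real.binEntropy (1 / (D + 1)) := by
  rw [mul_binEntropy_inv hD, mul_binEntropy_inv (by linarith)]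
  have := Real.strictConvexOn_mul_log.slope_strict_mono_adjacent (x := D - 1) (y := D)
    (z := D + 1) (by simp; linarith) (by simp; linarith) (by linarith) (by linarith)
  simpa using this

lemma binEnt_eq (θ : ℝ) : binEnt θ = Real.binEntropy θ / Real.log 2 := by
  have : Real.log 2 ≠ 0 := by positivity
  simp only [binEnt, Real.binEntropy, Real.logb, Real.log_inv]
  field_simp
  ring

/-- At `θ = 1 / (D + 1)` the symmetry `H(1 - θ) = H(θ)` collapses the rate, and its positivity is
the first of the three lower bounds on `Δ`. -/
lemma rate_endpoint_pos {f a D Δ : ℝ} (hf : 0 < f) (hD : 1 ≤ D) (ha : a = f * Δ)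
    (h : (1 + 1 / f) *
      (1 - D * binEnt (1 / D) / ((D + 1) * binEnt (1 / (D + 1))))⁻¹ < Δ) :
    0 < rate f a D (1 / (D + 1)) := by
  have hl : Real.log 2 ≠ 0 := by positivity
  have hlt := mul_binEntropy_inv_lt hD
  have hH : 0 < Real.binEntropy (1 / (D + 1)) :=
    Real.binEntropy_pos (by positivity) (by rw [div_lt_one (by linarith)]; linarith)
  have hB : 0 < (D + 1) * Real.binEntropy (1 / (D + 1)) := by positivity
  have e : D * binEnt (1 / D) / ((D + 1) * binEnt (1 / (D + 1))) =
      D * Real.binEntropy (1 / D) / ((D + 1) * Real.binEntropy (1 / (D + 1))) := by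
    rw [binEnt_eq, binEnt_eq]; field_simp
  have e2 : 1 - D * Real.binEntropy (1 / D) / ((D + 1) * Real.binEntropy (1 / (D + 1))) =
      ((D + 1) * Real.binEntropy (1 / (D + 1)) - D * Real.binEntropy (1 / D)) /
        ((D + 1) * Real.binEntropy (1 / (D + 1))) := by
    field_simp
  rw [e, e2, inv_div, ← mul_div_assoc, div_lt_iff₀ (by linarith)] at h
  have e3 : D * (1 / (D + 1)) = 1 - 1 / (D + 1) := by field_simp; ring
  rw [rate, e3, Real.binEntropy_one_sub, ha]
  have h5 := mul_lt_mul_of_pos_left h (show 0 < f / (D + 1) by positivity)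
  have e4 : f / (D + 1) * ((1 + 1 / f) * ((D + 1) * Real.binEntropy (1 / (D + 1)))) =
      (f + 1) * Real.binEntropy (1 / (D + 1)) := by field_simp
  have e5 : f / (D + 1) * (Δ * ((D + 1) * Real.binEntropy (1 / (D + 1))
      - D * Real.binEntropy (1 / D))) = f * Δ * Real.binEntropy (1 / (D + 1)) -
      f * Δ * D * Real.binEntropy (1 / D) * (1 / (D + 1)) := by field_simp
  rw [e4, e5] at h5
  linarith

/-- A concave function vanishing at `0` lies above its chord to `1 / (D + 1)`. -/
lemma rate_ge_linear {f a D : ℝ} (hf : 0 < f) (hD : 1 ≤ D) (ha : f * D ^ 2 + 1 ≤ a)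
    {θ : ℝ} (h0 : 0 ≤ θ) (h1 : θ ≤ 1 / (D + 1)) :
    (rate f a D (1 / (D + 1)) * (D + 1)) * θ ≤ rate f a D θ := by
  have hD1 : 0 < D + 1 := by linarith
  have hc := (concaveOn_rate hf hD ha).2
    (show (0 : ℝ) ∈ Set.Icc 0 (1 / (D + 1)) from ⟨le_rfl, by positivity⟩)
    (show 1 / (D + 1) ∈ Set.Icc 0 (1 / (D + 1)) from ⟨by positivity, le_rfl⟩)
    (show 0 ≤ 1 - (D + 1) * θ by rw [le_div_iff₀ hD1] at h1; linarith)
    (show 0 ≤ (D + 1) * θ by positivity) (by ring)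
  have e0 : rate f a D 0 = 0 := by simp [rate]
  have e1 : (D + 1) * θ * (1 / (D + 1)) = θ := by field_simp
  simp only [smul_eq_mul, e0, mul_zero, zero_add, e1] at hc
  linarith

/-- Near `0` the rate is at least `(a - 1 - f * D) * θ * log (1 / θ) - O(θ)`. -/
lemma rate_ge_log {f a D : ℝ} (hf : 0 < f) (hD : 1 ≤ D) (ha : f * D ^ 2 + 1 ≤ a)
    {θ : ℝ} (h0 : 0 < θ) (h1 : θ ≤ 1 / (D + 1)) :
    θ * ((a - 1 - f * D) * (-Real.log θ) - f * D - a * D * Real.binEntropy (1 / D)) ≤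
      rate f a D θ := by
  have hD1 : 0 < D + 1 := by linarith
  rw [le_div_iff₀ hD1] at h1
  have hDθ : 0 < D * θ := by positivity
  have h2 : 0 < 1 - D * θ := by linarith
  have h3 : 0 < 1 - θ := by linarith
  have hlow : θ * (-Real.log θ) ≤ Real.binEntropy θ := by
    have : Real.log (1 - θ) ≤ 0 := Real.log_nonpos h3.le (by linarith)
    rw [Real.binEntropy, Real.log_inv, Real.log_inv]
    have := mul_nonneg h3.le (neg_nonneg.2 this)
    linarith
  have hup : Real.binEntropy (D * θ) ≤ D * θ * (-Real.log θ) + D * θ := by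
    rw [Real.binEntropy, Real.log_inv, Real.log_mul (by linarith) h0.ne']
    have e1 := Real.log_le_sub_one_of_pos (inv_pos.2 h2)
    have e2 : (1 - D * θ) * Real.log (1 - D * θ)⁻¹ ≤ D * θ := by
      calc _ ≤ (1 - D * θ) * ((1 - D * θ)⁻¹ - 1) := by gcongr
        _ = D * θ := by field_simp; ring
    have e3 : 0 ≤ D * θ * Real.log D := mul_nonneg hDθ.le (Real.log_nonneg hD)
    linarith
  have ha1 : 0 ≤ a - 1 := by nlinarith [mul_nonneg hf.le (sq_nonneg D)]
  have m1 := mul_le_mul_of_nonneg_left hlow ha1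
  have m2 := mul_le_mul_of_nonneg_left hup hf.le
  rw [rate]
  linarith

/-! ### Counting socket bijections -/

/-- Double counting: a bijection sending `A` into `B` restricts to an injection `A ↪ B`, and each
such injection has at most `(N - |A|)!` extensions. -/
lemma card_equiv_mapsTo_le {α β : Type*} [Fintype α] [DecidableEq α] [Fintype β] [DecidableEq β]
    (A : Finset α) (B : Finset β) :
    (Finset.univ.filter fun π : α ≃ β => ∀ x ∈ A, π x ∈ B).card ≤
      (Fintype.card α - A.card).factorial * B.card.descFactorial A.card := by
  classical
  let X := {π : α ≃ β // ∀ x ∈ A, π x ∈ B}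
  let F : X → (A ↪ B) := fun π =>
    ⟨fun x => ⟨π.1 x.1, π.2 x.1 x.2⟩, fun x y h => Subtype.ext (π.1.injective (by simpa using h))⟩
  have hfib : ∀ b ∈ Finset.image F Finset.univ,
      (Finset.univ.filter fun π : X => F π = b).card ≤ (Fintype.card α - A.card).factorial := by
    intro b hb
    obtain ⟨π₀, -, h0⟩ := Finset.mem_image.1 hb
    let G : {π : X // F π = b} → {g : Equiv.Perm α // ∀ x, ¬ (x ∉ A) → g x = x} := fun π =>
      ⟨π.1.1.trans π₀.1.symm, fun x hx => by
        have hx' : x ∈ A := not_not.1 hx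
        have h := π.2.trans h0.symm
        have h2 : (F π.1 ⟨x, hx'⟩ : β) = F π₀ ⟨x, hx'⟩ := by rw [h]
        simp only [Equiv.trans_apply]
        rw [Equiv.symm_apply_eq]
        exact h2⟩
    have hG : Function.Injective G := by
      intro π π' h
      have h1 : π.1.1.trans π₀.1.symm = π'.1.1.trans π₀.1.symm := congrArg Subtype.val h
      apply Subtype.ext; apply Subtype.ext
      ext x
      have := congrArg (fun e : Equiv.Perm α => e x) h1
      simpa using this
    have h1 := Fintype.card_le_of_injective G hG
    rw [Fintype.card_subtype] at h1
    rw [← Fintype.card_congr (Equiv.Perm.subtypeEquivSubtypePerm (fun x => x ∉ A)),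
      Fintype.card_perm] at h1
    have h2 : Fintype.card {x // x ∉ A} = Fintype.card α - A.card := by
      rw [Fintype.card_subtype_compl]; simp
    rw [h2] at h1
    exact h1
  have h := Finset.card_le_mul_card_image (f := F) Finset.univ _ hfib
  have h3 : (Finset.image F Finset.univ).card ≤ B.card.descFactorial A.card := by
    refine (Finset.card_le_univ _).trans ?_
    rw [Fintype.card_embedding_eq]; simp
  rw [Finset.card_univ, Fintype.card_subtype] at h
  exact h.trans (Nat.mul_le_mul_left _ h3)

lemma card_sockets {n a : ℕ} {S : Finset ℕ} (hS : S ⊆ Finset.range n) :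
    (Finset.univ.filter fun k : Fin (n * a) => (k : ℕ) / a ∈ S).card = S.card * a := by
  rcases Nat.eq_zero_or_pos a with rfl | ha
  · simp
  have h := Finset.card_eq_sum_card_fiberwise (f := fun k : Fin (n * a) => (k : ℕ) / a)
    (s := Finset.univ.filter fun k : Fin (n * a) => (k : ℕ) / a ∈ S) (t := S)
    (fun k hk => (Finset.mem_filter.1 hk).2)
  rw [h, Finset.sum_const_nat (m := a)]
  intro u hu
  have hun := Finset.mem_range.1 (hS hu)
  have : (Finset.univ.filter fun k : Fin (n * a) => (k : ℕ) / a ∈ S).filter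
      (fun k : Fin (n * a) => (k : ℕ) / a = u) =
      (Finset.univ : Finset (Fin a)).map
        ⟨fun i => finProdFinEquiv (⟨u, hun⟩, i), fun i j h => by simpa using h⟩ := by
    ext k
    simp only [Finset.mem_filter, Finset.mem_univ, true_and, Finset.mem_map,
      DFunLike.coe]
    constructor
    · rintro ⟨-, h2⟩
      refine ⟨⟨(k : ℕ) % a, Nat.mod_lt _ ha⟩, Fin.ext ?_⟩
      subst h2
      exact Nat.mod_add_div _ _
    · rintro ⟨i, hi⟩
      have : ((finProdFinEquiv ((⟨u, hun⟩ : Fin n), i) : Fin (n * a)) : ℕ) / a = u := by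
        simp only [finProdFinEquiv_apply_val]
        rw [Nat.add_mul_div_left _ _ ha, Nat.div_eq_of_lt i.2, zero_add]
      have hk : (k : ℕ) / a = u := by rw [← hi]; exact this
      exact ⟨hk ▸ hu, hk⟩
  rw [this]; simp

/-- The expected number of pairs `(S, T)` of vertex sets of sizes `s` and `t` with `N(S) ⊆ T`. -/
noncomputable def pairBound (n r a Δ s t : ℕ) : ℝ :=
  (n.choose s : ℝ) * (r.choose t) * ((t * Δ).choose (s * a)) / ((n * a).choose (s * a))

/-- Union bound.  If `S` violates expansion, then `N(S)` lies in some set `T` of right vertices of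
size exactly `t = ⌈f * D * |S|⌉ - 1`, i.e. all sockets of `S` are matched into sockets of `T`. -/
lemma ncard_not_DGoodLR_le {n r a Δ : ℕ} {f D : ℝ} (hf : 0 < f) (hD : 1 ≤ D)
    (hr : (r : ℝ) = f * n) :
    (Set.ncard {π : Fin (n * a) ≃ Fin (r * Δ) | ¬ DGoodLR n r a Δ f D π} : ℝ) /
        (Nat.factorial (n * a)) ≤
      ∑ s ∈ (Finset.range (n + 1)).filter (fun s : ℕ => 1 ≤ s ∧ (s : ℝ) ≤ n / (D + 1)),
        pairBound n r a Δ s (⌈f * D * s⌉₊ - 1) := by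
  classical
  set I := (Finset.range (n + 1)).filter (fun s : ℕ => 1 ≤ s ∧ (s : ℝ) ≤ n / (D + 1)) with hI
  let t : ℕ → ℕ := fun s => ⌈f * D * s⌉₊ - 1
  let E : Finset ℕ → Finset ℕ → Finset (Fin (n * a) ≃ Fin (r * Δ)) := fun S T =>
    Finset.univ.filter fun π => ∀ x ∈ Finset.univ.filter (fun k : Fin (n * a) => (k : ℕ) / a ∈ S),
      π x ∈ Finset.univ.filter (fun k : Fin (r * Δ) => (k : ℕ) / Δ ∈ T)
  have hcover : {π : Fin (n * a) ≃ Fin (r * Δ) | ¬ DGoodLR n r a Δ f D π} ⊆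
      ↑(I.biUnion fun s => ((Finset.range n).powersetCard s).biUnion fun S =>
        ((Finset.range r).powersetCard (t s)).biUnion fun T => E S T) := by
    intro π hπ
    simp only [Set.mem_ofPred_eq, DGoodLR, not_forall, not_le] at hπ
    obtain ⟨S, hSn, hSc, hlt⟩ := hπ
    have hSfin : S.Finite := (Set.finite_lt_nat n).subset hSn
    lift S to Finset ℕ using hSfin
    rw [Set.ncard_coe_finset] at hSc hlt
    have hSr : S ⊆ Finset.range n := fun u hu => Finset.mem_range.2 (hSn u hu)
    set W : Finset ℕ := (Finset.range r).filter
      (fun v => ∃ u ∈ S, socketAdj a Δ π u v) with hW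
    have hWe : {v : ℕ | v < r ∧ ∃ u ∈ (S : Set ℕ), socketAdj a Δ π u v} = (W : Set ℕ) := by
      ext v; simp [hW]
    rw [hWe, Set.ncard_coe_finset] at hlt
    have hs1 : 1 ≤ S.card := by
      by_contra h0
      have : S.card = 0 := by omega
      rw [this] at hlt
      simp only [Nat.cast_zero, mul_zero] at hlt
      exact absurd hlt (not_lt.2 (Nat.cast_nonneg _))
    have hWt : W.card ≤ t S.card := by
      have := Nat.lt_ceil.2 hlt
      exact Nat.le_sub_one_of_lt this
    have htr : t S.card ≤ r := by
      have h1 : f * D * S.card ≤ r := by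
        rw [hr, mul_assoc]
        refine mul_le_mul_of_nonneg_left ?_ hf.le
        rw [le_div_iff₀ (by linarith)] at hSc
        nlinarith [(Nat.cast_nonneg S.card : (0 : ℝ) ≤ S.card)]
      exact (Nat.sub_le _ _).trans (Nat.ceil_le.2 h1)
    obtain ⟨T, hWT, hTr, hTc⟩ := Finset.exists_subsuperset_card_eq
      (Finset.filter_subset _ _ : W ⊆ Finset.range r) hWt (by simpa using htr)
    simp only [Finset.coe_biUnion, Set.mem_iUnion, Finset.mem_coe]
    refine ⟨S.card, ?_, S, Finset.mem_powersetCard.2 ⟨hSr, rfl⟩, T,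
      Finset.mem_powersetCard.2 ⟨hTr, hTc⟩, ?_⟩
    · refine Finset.mem_filter.2 ⟨Finset.mem_range.2 ?_, hs1, hSc⟩
      have := Finset.card_le_card hSr
      simp at this; omega
    · simp only [E, Finset.mem_filter, Finset.mem_univ, true_and]
      intro x hx
      apply hWT
      refine Finset.mem_filter.2 ⟨Finset.mem_range.2 ?_, _, hx, x, rfl, rfl⟩
      exact Nat.div_lt_of_lt_mul ((π x).2.trans_eq (mul_comm _ _))
  have hE : ∀ s ∈ I, ∀ S ∈ (Finset.range n).powersetCard s,
      ∀ T ∈ (Finset.range r).powersetCard (t s), (E S T).card ≤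
        (n * a - s * a).factorial * (t s * Δ).descFactorial (s * a) := by
    intro s _ S hS T hT
    obtain ⟨hS1, hS2⟩ := Finset.mem_powersetCard.1 hS
    obtain ⟨hT1, hT2⟩ := Finset.mem_powersetCard.1 hT
    have := card_equiv_mapsTo_le
      (Finset.univ.filter (fun k : Fin (n * a) => (k : ℕ) / a ∈ S))
      (Finset.univ.filter (fun k : Fin (r * Δ) => (k : ℕ) / Δ ∈ T))
    rw [card_sockets hS1, card_sockets hT1, hS2, hT2, Fintype.card_fin] at this
    convert this
  have hcard : Set.ncard {π : Fin (n * a) ≃ Fin (r * Δ) | ¬ DGoodLR n r a Δ f D π} ≤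
      ∑ s ∈ I, n.choose s * (r.choose (t s) *
        ((n * a - s * a).factorial * (t s * Δ).descFactorial (s * a))) := by
    refine (Set.ncard_le_ncard hcover (Finset.finite_toSet _)).trans ?_
    rw [Set.ncard_coe_finset]
    refine Finset.card_biUnion_le.trans (Finset.sum_le_sum fun s hs => ?_)
    refine (Finset.card_biUnion_le_card_mul _ _ _ fun S hS =>
      (Finset.card_biUnion_le_card_mul _ _ _ fun T hT => hE s hs S hS T hT)).trans ?_
    simp
  rw [div_le_iff₀ (by exact_mod_cast Nat.factorial_pos _), Finset.sum_mul]
  refine (Nat.cast_le (α := ℝ).2 hcard).trans ?_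
  push_cast
  refine Finset.sum_le_sum fun s hs => le_of_eq ?_
  have hsn : s ≤ n := by
    have := Finset.mem_range.1 (Finset.mem_filter.1 hs).1; omega
  have hle : s * a ≤ n * a := Nat.mul_le_mul_right _ hsn
  have hc : ((n * a).choose (s * a) : ℝ) ≠ 0 := by exact_mod_cast (Nat.choose_pos hle).ne'
  have e : ((n * a).factorial : ℝ) = (n * a).choose (s * a) * (s * a).factorial *
      (n * a - s * a).factorial := by
    exact_mod_cast (Nat.choose_mul_factorial_mul_factorial hle).symm
  have e2 : ((t s * Δ).descFactorial (s * a) : ℝ) =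
      (s * a).factorial * (t s * Δ).choose (s * a) := by
    exact_mod_cast Nat.descFactorial_eq_factorial_mul_choose _ _
  rw [pairBound, e, e2]
  field_simp
  try ring

/-! ### Estimating the union bound -/

/-- With `q = y / r`, an integer `t` within `1` of `y` costs only a factor `D` over the entropy
bound at `q`, because `q / (1 - q) ≤ D`.  No monotonicity of the entropy is needed, which matters
since `q` may exceed `1 / 2`. -/
lemma choose_right_le {r t : ℕ} {D q y : ℝ} (hD : 1 ≤ D) (hq0 : 0 < q)
    (hq1 : q * (D + 1) ≤ D) (htr : t ≤ r) (hy : y = q * r) (h1 : (t : ℝ) ≤ y)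
    (h2 : y ≤ t + 1) :
    (r.choose t : ℝ) ≤ D * Real.exp (r * Real.binEntropy q) := by
  have hq2 : q < 1 := by nlinarith
  have hq3 : 0 < 1 - q := by linarith
  refine (choose_le_exp htr hq0 hq2).trans ?_
  have e : D * Real.exp (r * Real.binEntropy q) =
      Real.exp (Real.log D + r * Real.binEntropy q) := by
    rw [Real.exp_add, Real.exp_log (by linarith)]
  rw [e]
  apply Real.exp_le_exp.2
  have h3 : Real.log q - Real.log (1 - q) ≤ Real.log D := by
    rw [← Real.log_div hq0.ne' hq3.ne']
    apply Real.log_le_log (by positivity)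
    rw [div_le_iff₀ hq3]; linarith
  have h4 : (y - t) * (Real.log q - Real.log (1 - q)) ≤ Real.log D := by
    have hl := Real.log_nonneg hD
    calc _ ≤ (y - t) * Real.log D := mul_le_mul_of_nonneg_left h3 (by linarith)
      _ ≤ 1 * Real.log D := mul_le_mul_of_nonneg_right (by linarith) hl
      _ = _ := one_mul _
  rw [Real.binEntropy, Real.log_inv, Real.log_inv]
  rw [hy] at h4
  linarith

lemma choose_sockets_le {m k : ℕ} {D : ℝ} (hD : 1 ≤ D) (h : (m : ℝ) < D * k) :
    (m.choose k : ℝ) ≤ Real.exp (D * k * Real.binEntropy (1 / D)) := by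
  -- When `D = 1` one always has `m < k`, so `1 / D < 1` may be assumed afterwards.
  rcases lt_or_ge m k with hmk | hkm
  · rw [Nat.choose_eq_zero_of_lt hmk, Nat.cast_zero]; positivity
  have hkm' : (k : ℝ) ≤ m := by exact_mod_cast hkm
  have hk0 : (0 : ℝ) ≤ k := Nat.cast_nonneg _
  have hD1 : 1 < D := by
    rcases hD.eq_or_lt with rfl | h'
    · linarith
    · exact h'
  have hp : 1 / D < 1 := by rw [div_lt_one (by linarith)]; exact hD1
  refine (choose_le_exp hkm (p := 1 / D) (by positivity) hp).trans (Real.exp_le_exp.2 ?_)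
  have hl : Real.log (1 - 1 / D) ≤ 0 := by
    have : 0 < 1 / D := by positivity
    apply Real.log_nonpos <;> linarith
  have h1 : (D * k - m) * Real.log (1 - 1 / D) ≤ 0 :=
    mul_nonpos_of_nonneg_of_nonpos (by linarith) hl
  have e : D * k * Real.binEntropy (1 / D) =
      -(k * Real.log (1 / D) + (D * k - k) * Real.log (1 - 1 / D)) := by
    rw [Real.binEntropy, Real.log_inv, Real.log_inv]
    field_simp
    ring
  rw [e]
  linarith

/-- Combines the entropy estimates for the four binomial coefficients; `Δ * f = a` and `r = f * n`
turn the sum of their exponents into `-n * rate f a D (s / n)`. -/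
lemma pairBound_le {n r a Δ s : ℕ} {f D : ℝ} (hf : 0 < f) (hD : 1 ≤ D)
    (ha0 : 0 < a) (hΔ : 0 < Δ) (ha : (a : ℝ) = f * Δ) (hr : (r : ℝ) = f * n) (hs : 1 ≤ s)
    (hsn : (s : ℝ) ≤ n / (D + 1)) :
    pairBound n r a Δ s (⌈f * D * s⌉₊ - 1) ≤
      D * Real.exp 1 * a * s * Real.exp (-(n * rate f a D (s / n))) := by
  set t := ⌈f * D * s⌉₊ - 1 with ht
  have hD0 : 0 < D := by linarith
  rw [le_div_iff₀ (by linarith)] at hsn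
  have hs0 : (0 : ℝ) < s := by exact_mod_cast hs
  have ha0' : (0 : ℝ) < a := by exact_mod_cast ha0
  have hΔ' : (0 : ℝ) < Δ := by exact_mod_cast hΔ
  have hDs : 0 < D * s := by positivity
  have hn0 : (0 : ℝ) < n := by linarith
  have hsn' : s < n := by
    have : (s : ℝ) < n := by linarith
    exact_mod_cast this
  have hy0 : 0 < f * D * s := by positivity
  have hceil : 0 < ⌈f * D * s⌉₊ := Nat.ceil_pos.2 hy0
  -- `t` is the largest natural number strictly below `f * D * s`.
  have ht1 : (t : ℝ) < f * D * s := Nat.lt_ceil.1 (by omega)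
  have ht2 : f * D * s ≤ t + 1 := by
    have h := Nat.le_ceil (f * D * s)
    have e : ⌈f * D * s⌉₊ = t + 1 := by omega
    rw [e] at h; exact_mod_cast h
  have htr : t ≤ r := by
    have : (t : ℝ) ≤ r := by rw [hr]; nlinarith
    exact_mod_cast this
  have b1 : (n.choose s : ℝ) ≤ Real.exp (n * Real.binEntropy (s / n)) := by
    have h1 : (s : ℝ) / n < 1 := by rw [div_lt_one hn0]; exact_mod_cast hsn'
    refine (choose_le_exp hsn'.le (p := (s : ℝ) / n) (by positivity) h1).trans_eq ?_
    congr 1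
    rw [Real.binEntropy, Real.log_inv, Real.log_inv]
    field_simp
    ring
  have b2 : (r.choose t : ℝ) ≤ D * Real.exp (r * Real.binEntropy (D * (s / n))) := by
    refine choose_right_le hD (y := f * D * s) (by positivity) ?_ htr ?_ ht1.le ht2
    · rw [← mul_div_assoc, div_mul_eq_mul_div, div_le_iff₀ hn0]; nlinarith
    · rw [hr]; field_simp
  have b3 : ((t * Δ).choose (s * a) : ℝ) ≤
      Real.exp (D * (s * a : ℕ) * Real.binEntropy (1 / D)) := by
    refine choose_sockets_le hD ?_
    push_cast
    rw [ha]
    calc (t : ℝ) * Δ < (f * D * s) * Δ := by gcongr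
      _ = _ := by ring
  have b4 : Real.exp (n * a * Real.binEntropy (s / n)) ≤
      Real.exp 1 * (s * a) * ((n * a).choose (s * a) : ℝ) := by
    have h := exp_entropy_le_choose (N := n * a) (k := s * a) (by nlinarith)
      (Nat.mul_lt_mul_of_pos_right hsn' ha0)
    push_cast at h
    rwa [mul_div_mul_right _ _ ha0'.ne'] at h
  have hc : (0 : ℝ) < (n * a).choose (s * a) := by
    exact_mod_cast Nat.choose_pos (Nat.mul_le_mul_right _ hsn'.le)
  rw [pairBound, div_le_iff₀ hc]
  calc (n.choose s : ℝ) * (r.choose t) * ((t * Δ).choose (s * a))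
      ≤ Real.exp (n * Real.binEntropy (s / n)) *
          (D * Real.exp (r * Real.binEntropy (D * (s / n)))) *
          Real.exp (D * (s * a : ℕ) * Real.binEntropy (1 / D)) := by gcongr
    _ = D * Real.exp (-(n * rate f a D (s / n))) *
          Real.exp (n * a * Real.binEntropy (s / n)) := by
        rw [show Real.exp (n * Real.binEntropy (s / n)) *
          (D * Real.exp (r * Real.binEntropy (D * (s / n)))) *
          Real.exp (D * (s * a : ℕ) * Real.binEntropy (1 / D)) =
          D * (Real.exp (n * Real.binEntropy (s / n)) *
          Real.exp (r * Real.binEntropy (D * (s / n))) *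
          Real.exp (D * (s * a : ℕ) * Real.binEntropy (1 / D))) by ring,
          mul_assoc D (Real.exp (-(n * rate f a D (s / n)))),
          ← Real.exp_add, ← Real.exp_add, ← Real.exp_add]
        congr 2
        rw [rate, hr]
        push_cast
        field_simp
        ring
    _ ≤ D * Real.exp (-(n * rate f a D (s / n))) *
          (Real.exp 1 * (s * a) * ((n * a).choose (s * a) : ℝ)) := by gcongr
    _ = _ := by ring

/-! ### Convergence to zero and the symmetry between the two sides -/

/-- The majorant of the union-bound summand, extended by zero outside the admissible sizes. -/
noncomputable def summandBound (f a D : ℝ) (n s : ℕ) : ℝ :=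
  if 1 ≤ s ∧ (s : ℝ) ≤ n / (D + 1) then
    D * Real.exp 1 * a * s * Real.exp (-(n * rate f a D (s / n))) else 0

lemma summandBound_nonneg {f a D : ℝ} (hD : 1 ≤ D) (ha : 0 ≤ a) (n s : ℕ) : 0 ≤ summandBound f a D n s := by
  rw [summandBound]; split_ifs <;> positivity

/-- For a fixed size `s`, the exponent `n * rate (s / n)` grows at least like
`s * (a - 1 - f * D) * log (n / s)`. -/
lemma tendsto_summandBound {f a D : ℝ} (hf : 0 < f) (hD : 1 ≤ D) (ha : f * D ^ 2 + 1 < a) (s : ℕ) :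
    Tendsto (fun n => summandBound f a D n s) atTop (nhds 0) := by
  rcases Nat.eq_zero_or_pos s with rfl | hs
  · simp [summandBound]
  have hs0 : (0 : ℝ) < s := by exact_mod_cast hs
  have ha0 : 0 ≤ a := by nlinarith [mul_nonneg hf.le (sq_nonneg D)]
  set C := f * D + a * D * Real.binEntropy (1 / D) with hC
  have hcoef : 0 < a - 1 - f * D := by
    have : f * D ≤ f * D ^ 2 := by gcongr; nlinarith
    linarith
  have hlim : Tendsto (fun n : ℕ => D * Real.exp 1 * a * s *
      Real.exp (-(s * ((a - 1 - f * D) * Real.log ((n : ℝ) / s) - C)))) atTop (nhds 0) := by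
    rw [show (0 : ℝ) = D * Real.exp 1 * a * s * 0 by ring]
    refine Tendsto.const_mul _ (Real.tendsto_exp_neg_atTop_nhds_zero.comp ?_)
    refine Tendsto.const_mul_atTop hs0 (tendsto_atTop_add_const_right _ (-C) ?_)
    refine Tendsto.const_mul_atTop hcoef (Real.tendsto_log_atTop.comp ?_)
    exact tendsto_natCast_atTop_atTop.atTop_div_const hs0
  refine squeeze_zero (fun n => summandBound_nonneg hD ha0 n s) (fun n => ?_) hlim
  rw [summandBound]
  split_ifs with h
  · obtain ⟨-, h⟩ := h
    have h' := h
    rw [le_div_iff₀ (by linarith)] at h'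
    have hn0 : (0 : ℝ) < n := by
      have : 0 < (s : ℝ) * (D + 1) := by positivity
      linarith
    have h1 : (s : ℝ) / n ≤ 1 / (D + 1) := by
      rw [div_le_div_iff₀ hn0 (by linarith)]; linarith
    have h2 := rate_ge_log hf hD ha.le (θ := (s : ℝ) / n) (by positivity) h1
    have h3 : -Real.log ((s : ℝ) / n) = Real.log ((n : ℝ) / s) := by
      rw [← Real.log_inv, inv_div]
    rw [h3] at h2
    have h4 := mul_le_mul_of_nonneg_left h2 hn0.le
    have h5 : (n : ℝ) * (s / n * ((a - 1 - f * D) * Real.log ((n : ℝ) / s) - f * D -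
        a * D * Real.binEntropy (1 / D))) =
        s * ((a - 1 - f * D) * Real.log ((n : ℝ) / s) - C) := by
      rw [hC]; field_simp; ring
    rw [h5] at h4
    gcongr
  · positivity

/-- Dominated convergence: `rate_ge_linear` gives the summable majorant `s * exp (-c * s)`, which
does not depend on `n`. -/
lemma tendsto_tsum_summandBound {f a D : ℝ} (hf : 0 < f) (hD : 1 ≤ D) (ha : f * D ^ 2 + 1 < a)
    (hpos : 0 < rate f a D (1 / (D + 1))) :
    Tendsto (fun n => ∑' s, summandBound f a D n s) atTop (nhds 0) := by
  have ha0 : 0 ≤ a := by nlinarith [mul_nonneg hf.le (sq_nonneg D)]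
  set c := rate f a D (1 / (D + 1)) * (D + 1) with hc
  have hc0 : 0 < c := mul_pos hpos (by linarith)
  have hsum : Summable fun s : ℕ => D * Real.exp 1 * a * ((s : ℝ) ^ 1 * Real.exp (-c * s)) :=
    (Real.summable_pow_mul_exp_neg_nat_mul 1 hc0).mul_left _
  have := tendsto_tsum_of_dominated_convergence (𝓕 := atTop) (f := fun n s => summandBound f a D n s)
    (g := fun _ => 0) hsum (fun s => tendsto_summandBound hf hD ha s)
    (Eventually.of_forall fun n s => ?_)
  · simpa using this
  rw [Real.norm_of_nonneg (summandBound_nonneg hD ha0 n s), summandBound]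
  split_ifs with h
  · obtain ⟨hs, h⟩ := h
    have hs0 : (0 : ℝ) < s := by exact_mod_cast hs
    have h' := h
    rw [le_div_iff₀ (by linarith)] at h'
    have hn0 : (0 : ℝ) < n := by
      have : 0 < (s : ℝ) * (D + 1) := by positivity
      linarith
    have h1 : (s : ℝ) / n ≤ 1 / (D + 1) := by
      rw [div_le_div_iff₀ hn0 (by linarith)]; linarith
    have h2 := mul_le_mul_of_nonneg_left
      (rate_ge_linear hf hD ha.le (θ := (s : ℝ) / n) (by positivity) h1) hn0.le
    rw [← hc, show (n : ℝ) * (c * (s / n)) = c * s by field_simp] at h2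
    rw [pow_one, ← mul_assoc]
    gcongr
    linarith
  · positivity

/-- The one-sided probability bound. Applied to the transposed graph, with `f` replaced by `1 / f`,
it also controls expansion from right to left. -/
lemma ncard_not_DGoodLR_le_tsum {n r a Δ : ℕ} {f D : ℝ} (hf : 0 < f) (hD : 1 ≤ D)
    (ha0 : 0 < a) (hΔ : 0 < Δ) (ha : (a : ℝ) = f * Δ) (hr : (r : ℝ) = f * n) :
    (Set.ncard {π : Fin (n * a) ≃ Fin (r * Δ) | ¬ DGoodLR n r a Δ f D π} : ℝ) /
        (Nat.factorial (n * a)) ≤ ∑' s, summandBound f a D n s := by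
  refine (ncard_not_DGoodLR_le hf hD hr).trans ?_
  rw [tsum_eq_sum (s := (Finset.range (n + 1)).filter
    (fun s : ℕ => 1 ≤ s ∧ (s : ℝ) ≤ n / (D + 1)))]
  · refine Finset.sum_le_sum fun s hs => ?_
    have h := (Finset.mem_filter.1 hs).2
    rw [summandBound, if_pos h]
    exact pairBound_le hf hD ha0 hΔ ha hr h.1 h.2
  · intro s hs
    rw [summandBound, if_neg]
    intro h
    refine hs (Finset.mem_filter.2 ⟨Finset.mem_range.2 ?_, h⟩)
    have h2 : (s : ℝ) ≤ n := h.2.trans (div_le_self (Nat.cast_nonneg _) (by linarith))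
    have : s ≤ n := by exact_mod_cast h2
    omega

lemma socketAdj_symm {N M : ℕ} (a Δ : ℕ) (π : Fin N ≃ Fin M) (u v : ℕ) :
    socketAdj Δ a π.symm v u ↔ socketAdj a Δ π u v := by
  constructor
  · rintro ⟨k, h1, h2⟩
    exact ⟨π.symm k, h2, by simpa using h1⟩
  · rintro ⟨k, h1, h2⟩
    exact ⟨π k, h2, by simpa using h1⟩

lemma DGoodRL_of_symm {n r a Δ : ℕ} {f D : ℝ} (hr : (r : ℝ) = f * n)
    (π : Fin (n * a) ≃ Fin (r * Δ)) (h : DGoodLR r n Δ a (1 / f) D π.symm) :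
    DGoodRL n r a Δ f D π := by
  intro T hT hc
  have := h T hT (by rwa [hr])
  simp only [socketAdj_symm] at this
  refine le_trans (le_of_eq ?_) this
  ring

/-- **Random bipartite graphs are two-sided expanders.**  Let `f > 0` be rational and `Δ` a
positive integer with `fΔ = a ∈ ℕ`.  For `n` with `fn ∈ ℕ` (i.e. `r n = fn`), consider the
uniformly random socket bijection between left and right sockets.  If `D ≥ 1` and
`Δ > max{(1 + 1/f)·(1 − D·h(1/D)/((D+1)·h(1/(D+1))))⁻¹, D² + 1/f, D²/f + 1}`, then the
probability that the resulting multigraph is not `D`-good tends to `0`. -/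
theorem random_bipartite_graph_DGood
    (f : ℚ) (hf : 0 < f) (Δ : ℕ) (hΔ : 0 < Δ) (a : ℕ) (ha : (a : ℚ) = f * Δ)
    (D : ℝ) (hD : 1 ≤ D)
    (hΔbig : (Δ : ℝ) >
      max (max ((1 + 1 / (f : ℝ)) *
            (1 - D * binEnt (1 / D) / ((D + 1) * binEnt (1 / (D + 1))))⁻¹)
          (D ^ 2 + 1 / (f : ℝ)))
        (D ^ 2 / (f : ℝ) + 1))
    (r : ℕ → ℕ) :
    Tendsto
      (fun n : ℕ =>
        (Set.ncard {π : Fin (n * a) ≃ Fin (r n * Δ) |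
            ¬ DGood n (r n) a Δ (f : ℝ) D π} : ℝ) / (Nat.factorial (n * a)))
      (atTop ⊓ Filter.principal {n : ℕ | (r n : ℚ) = f * n}) (nhds 0) := by
  have hf' : (0 : ℝ) < (f : ℝ) := by exact_mod_cast hf
  have hΔ' : (0 : ℝ) < (Δ : ℝ) := by exact_mod_cast hΔ
  have ha' : (a : ℝ) = (f : ℝ) * Δ := by exact_mod_cast ha
  have ha0' : (0 : ℝ) < a := by rw [ha']; positivity
  have ha0 : 0 < a := by exact_mod_cast ha0'
  obtain ⟨⟨h1, h2⟩, h3⟩ : ((_ < (Δ : ℝ)) ∧ (_ < (Δ : ℝ))) ∧ (_ < (Δ : ℝ)) := by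
    simpa only [gt_iff_lt, max_lt_iff] using hΔbig
  set F : ℝ := (f : ℝ) with hF
  have hΔa : (Δ : ℝ) = (1 / F) * a := by rw [ha']; field_simp
  have c1 : F * D ^ 2 + 1 < a := by
    have := mul_lt_mul_of_pos_left h2 hf'
    rw [← ha', mul_add, mul_one_div_cancel hf'.ne'] at this
    exact this
  have c2 : 1 / F * D ^ 2 + 1 < Δ := by
    rw [one_div_mul_eq_div]; exact h3
  have p1 := rate_endpoint_pos hf' hD ha' h1
  have p2 : 0 < rate (1 / F) Δ D (1 / (D + 1)) := by
    refine rate_endpoint_pos (by positivity) hD hΔa ?_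
    have := mul_lt_mul_of_pos_left h1 hf'
    rw [← ha', ← mul_assoc] at this
    have e : F * (1 + 1 / F) = 1 + 1 / (1 / F) := by field_simp; ring
    rwa [e] at this
  set l := atTop ⊓ Filter.principal {n : ℕ | (r n : ℚ) = f * n} with hl
  have hmem : ∀ᶠ n in l, (r n : ℝ) = F * n := by
    have : ∀ᶠ n in l, (r n : ℚ) = f * n := mem_inf_of_right (mem_principal_self _)
    filter_upwards [this] with n hn
    rw [hF]; exact_mod_cast congrArg (fun q : ℚ => (q : ℝ)) hn
  have hrt : Tendsto r l atTop := by
    rw [← tendsto_natCast_atTop_iff (R := ℝ)]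
    have : Tendsto (fun n : ℕ => F * (n : ℝ)) l atTop :=
      (tendsto_natCast_atTop_atTop.const_mul_atTop hf').mono_left inf_le_left
    exact this.congr' (hmem.mono fun n hn => hn.symm)
  have t1 := (tendsto_tsum_summandBound hf' hD c1 p1).mono_left (inf_le_left : l ≤ atTop)
  have t2 := (tendsto_tsum_summandBound (by positivity) hD c2 p2).comp hrt
  have t3 := t1.add t2
  rw [add_zero] at t3
  refine squeeze_zero' (Eventually.of_forall fun n => by positivity) ?_ t3
  filter_upwards [hmem] with n hn
  have hn' : (n : ℝ) = 1 / F * r n := by rw [hn]; field_simp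
  have b1 := ncard_not_DGoodLR_le_tsum hf' hD ha0 hΔ ha' hn
  have b2 := ncard_not_DGoodLR_le_tsum (one_div_pos.2 hf') hD hΔ ha0 hΔa hn'
  have hN : r n * Δ = n * a := by
    have : (r n * Δ : ℝ) = n * a := by rw [hn, ha']; ring
    exact_mod_cast this
  rw [congrArg Nat.factorial hN] at b2
  refine le_trans ?_ (add_le_add b1 b2)
  rw [← add_div]
  gcongr
  norm_cast
  have hsub : {π : Fin (n * a) ≃ Fin (r n * Δ) | ¬ DGood n (r n) a Δ F D π} ⊆
      {π | ¬ DGoodLR n (r n) a Δ F D π} ∪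
        Equiv.symm '' {π : Fin (r n * Δ) ≃ Fin (n * a) | ¬ DGoodLR (r n) n Δ a (1 / F) D π} := by
    intro π hπ
    by_cases h : DGoodLR n (r n) a Δ F D π
    · refine Or.inr ⟨π.symm, fun h' => hπ ⟨h, DGoodRL_of_symm hn π h'⟩, rfl⟩
    · exact Or.inl h
  calc _ ≤ _ := Set.ncard_le_ncard hsub (Set.toFinite _)
    _ ≤ _ := Set.ncard_union_le _ _
    _ ≤ _ := Nat.add_le_add_left (Set.ncard_image_le (Set.toFinite _)) _
end

section
/- (Fundamental gain of LDA lattices.) Fix a rational R_f ∈ (0,1), D > 1/(1−R_f) + 2, and λ with 1/(D(1−R_f)−1) < λ < 1/(2(1−R_f)). Let p : ℕ → ℕ be a sequence of primes with p(n)/n^λ → 1; restrict to n with n(1−R_f) ∈ ℕ. For each such n let H(n) ∈ {0,1}^{n(1−R_f) × n} be a skeleton matrix whose Tanner graph satisfies |N(S)| ≥ D(1−R_f)|S| for every set S of columns with |S| ≤ n/(D+1), let ℍ(n) be the associated random matrix over 𝔽_{p(n)}, and let Λ_f(n) = {x ∈ ℤⁿ : ℍ(n)x ≡ 0 (mod p(n))},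 a full-rank sublattice of ℤⁿ containing p(n)ℤⁿ. Then for every M > 0, the probability that the fundamental gain γ(Λ_f(n)) = d_{E,min}(Λ_f(n))² / covol(Λ_f(n))^{2/n} exceeds M tends to 1 as n → ∞. -/
open Filter

/-!
The proof is a first-moment argument. Write `a = 1 - R_f`, so `m = a n`.

* Since `|ker M| ≥ p ^ (n - m)`, the covolume is at most `p ^ m`, so `covol ^ (2 / n) ≤ p ^ (2a)`,
  which has order `n ^ (2aλ) = o(n)` (`lda_covol_bound`). The gain exceeds `M₀` as soon as no
  nonzero lattice vector has squared length below `R = (M₀ + 1) p ^ (2a)`.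
* A nonzero integer vector with `‖x‖² < R` has support `S` with `|S| < R ≤ n / (D + 1)` and
  coordinates in `[-√R, √R]`, with `√R < p`; so its support does not shrink modulo `p`, and
  expansion gives `ℙ(ℍ x = 0) ≤ p ^ (-|N(S)|) ≤ p ^ (-D a |S|)` (`lda_card_annihilator`).
* The sum of `w ^ |supp x|` over the nonzero `x` in the box `[-k, k]ⁿ` is `(1 + 2kw)ⁿ - 1`
  (`lda_sum_box`). With `w = p ^ (-D a)` and `k ≤ √R` this is at most `exp (2 n √R p ^ (-D a)) - 1`,
  and `n √R p ^ (-D a)` has order `n ^ (1 - (D - 1) a λ)`. The exponent is negative because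
  `(D - 1) a > D a - 1` and `λ (D a - 1) > 1`.

Probabilities are handled as cardinalities, as in the statement.
-/

/-- Squared minimum Euclidean distance of the LDA lattice
`Λ_f = {x ∈ ℤⁿ : M·(x mod p) = 0}`. -/
noncomputable def ldaMinDistSq {mdim n : ℕ} (p : ℕ)
    (M : Matrix (Fin mdim) (Fin n) (ZMod p)) : ℝ :=
  sInf {r : ℝ | ∃ x : Fin n → ℤ, x ≠ 0 ∧
    M.mulVec (fun j => ((x j : ℤ) : ZMod p)) = 0 ∧ r = ∑ i, ((x i : ℝ)) ^ 2}

/-- Covolume of the LDA lattice `Λ_f = {x ∈ ℤⁿ : M·(x mod p) = 0}`: since `Λ_f` contains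
`pℤⁿ` (of covolume `pⁿ`) with index `|ker M|`, the volume of a fundamental domain of `Λ_f`
is `pⁿ / |ker M|`. -/
noncomputable def ldaCovol {mdim n : ℕ} (p : ℕ)
    (M : Matrix (Fin mdim) (Fin n) (ZMod p)) : ℝ :=
  (p : ℝ) ^ n / (Set.ncard {x : Fin n → ZMod p | M.mulVec x = 0} : ℝ)

open Classical in
/-- The number of matrices over `𝔽_p` supported on the skeleton `H` is `p` to the number of ones
of `H`. -/
lemma lda_card_skeleton {m n p : ℕ} [Fact p.Prime] (H : Matrix (Fin m) (Fin n) Bool) :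
    Set.ncard {M : Matrix (Fin m) (Fin n) (ZMod p) | ∀ i j, H i j = false → M i j = 0}
      = p ^ (Set.ncard {q : Fin m × Fin n | H q.1 q.2 = true}) := by
  let e : {M : Matrix (Fin m) (Fin n) (ZMod p) | ∀ i j, H i j = false → M i j = 0} ≃
      ({q : Fin m × Fin n | H q.1 q.2 = true} → ZMod p) :=
    { toFun := fun M q => M.1 q.1.1 q.1.2
      invFun := fun f => ⟨fun i j => if h : H i j = true then f ⟨(i, j), h⟩ else 0, by
        intro i j h
        simp [h]⟩
      left_inv := by
        rintro ⟨M, hM⟩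
        ext i j
        by_cases h : H i j = true
        · simp [h]
        · simp [h, hM i j (by simpa using h)]
      right_inv := by
        intro f
        ext ⟨⟨i, j⟩, h⟩
        have h' : H i j = true := h
        simp [h'] }
  rw [← Nat.card_coe_set_eq, Nat.card_congr e, Nat.card_fun, Nat.card_zmod, Nat.card_coe_set_eq]

open Classical in
/-- `ℙ(ℍ v = 0) ≤ p ^ (-|N(supp v)|)`, in counting form. In each row `i` adjacent to the support of
`v` fix an entry `(i, j i)` with `v (j i) ≠ 0`; adding arbitrary field elements to these entries
embeds (matrices killing `v`) × `𝔽_p ^ N(supp v)` into the set of all matrices. -/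
lemma lda_card_annihilator {m n p : ℕ} [Fact p.Prime] (H : Matrix (Fin m) (Fin n) Bool)
    (v : Fin n → ZMod p) :
    Set.ncard {M : Matrix (Fin m) (Fin n) (ZMod p) |
        (∀ i j, H i j = false → M i j = 0) ∧ M.mulVec v = 0}
      * p ^ (Set.ncard {i : Fin m | ∃ j ∈ {j | v j ≠ 0}, H i j = true})
      ≤ p ^ (Set.ncard {q : Fin m × Fin n | H q.1 q.2 = true}) := by
  rw [← lda_card_skeleton (p := p) H]
  have hc : ∀ i : {i : Fin m | ∃ j ∈ {j | v j ≠ 0}, H i j = true},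
      ∃ j, v j ≠ 0 ∧ H i j = true := fun i => by
    obtain ⟨j, hj, h⟩ := i.2
    exact ⟨j, hj, h⟩
  choose c hcv hcH using hc
  let T : ({i : Fin m | ∃ j ∈ {j | v j ≠ 0}, H i j = true} → ZMod p) →
      Matrix (Fin m) (Fin n) (ZMod p) := fun t i j =>
    if h : i ∈ {i : Fin m | ∃ j ∈ {j | v j ≠ 0}, H i j = true} then
      (if j = c ⟨i, h⟩ then t ⟨i, h⟩ else 0) else 0
  have hT : ∀ t i, (T t).mulVec v i.1 = t i * v (c i) := by
    intro t i
    have hi := i.2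
    simp only [Matrix.mulVec, dotProduct, T, dif_pos hi]
    simp
  have key : Nat.card ({M : Matrix (Fin m) (Fin n) (ZMod p) |
        (∀ i j, H i j = false → M i j = 0) ∧ M.mulVec v = 0} ×
        ({i : Fin m | ∃ j ∈ {j | v j ≠ 0}, H i j = true} → ZMod p)) ≤
      Nat.card {M : Matrix (Fin m) (Fin n) (ZMod p) | ∀ i j, H i j = false → M i j = 0} := by
    refine Nat.card_le_card_of_injective (fun q => ⟨q.1.1 + T q.2, ?_⟩) ?_
    · intro i j hij
      rw [Matrix.add_apply, q.1.2.1 i j hij, zero_add]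
      simp only [T]
      split_ifs with h1 h2
      · have := hcH ⟨i, h1⟩
        rw [← h2, hij] at this
        simp at this
      · rfl
      · rfl
    · rintro ⟨⟨M, hM⟩, t⟩ ⟨⟨M', hM'⟩, t'⟩ h
      have h1 : M + T t = M' + T t' := congrArg Subtype.val h
      have ht : t = t' := by
        ext i
        have h2 := congrFun (congrArg (fun A => Matrix.mulVec A v) h1) i.1
        simp only [Matrix.add_mulVec, hM.2, hM'.2, zero_add, hT] at h2
        exact mul_right_cancel₀ (hcv i) h2
      subst ht
      have h3 : M = M' := add_right_cancel h1
      subst h3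
      rfl
  rwa [Nat.card_prod, Nat.card_fun, Nat.card_zmod, Nat.card_coe_set_eq, Nat.card_coe_set_eq,
    Nat.card_coe_set_eq] at key

lemma lda_card_ker {m n p : ℕ} [Fact p.Prime] (M : Matrix (Fin m) (Fin n) (ZMod p)) :
    p ^ n ≤ Set.ncard {x : Fin n → ZMod p | M.mulVec x = 0} * p ^ m := by
  let f : (Fin n → ZMod p) →+ (Fin m → ZMod p) := (Matrix.mulVecLin M).toAddMonoidHom
  have h1 : Nat.card f.ker * f.ker.index = Nat.card (Fin n → ZMod p) := f.ker.card_mul_index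
  have h2 : f.ker.index = Nat.card f.range := AddSubgroup.index_ker f
  have h3 : Nat.card f.range ≤ Nat.card (Fin m → ZMod p) :=
    Nat.card_le_card_of_injective _ Subtype.val_injective
  have h4 : Nat.card f.ker = Set.ncard {x : Fin n → ZMod p | M.mulVec x = 0} := by
    rw [← Nat.card_coe_set_eq]
    rfl
  have h5 : Nat.card (Fin n → ZMod p) = p ^ n := by
    rw [Nat.card_fun, Nat.card_zmod, Nat.card_fin]
  have h6 : Nat.card (Fin m → ZMod p) = p ^ m := by
    rw [Nat.card_fun, Nat.card_zmod, Nat.card_fin]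
  rw [← h5, ← h1, ← h4, h2]
  exact Nat.mul_le_mul_left _ (h3.trans h6.le)

lemma lda_covol_bound {m n p : ℕ} [Fact p.Prime] (M : Matrix (Fin m) (Fin n) (ZMod p)) :
    0 < ldaCovol p M ∧ ldaCovol p M ≤ (p : ℝ) ^ m := by
  have hp : 0 < (p : ℝ) := by exact_mod_cast (Fact.out : p.Prime).pos
  have h0 : 0 < Set.ncard {x : Fin n → ZMod p | M.mulVec x = 0} := by
    rw [Set.ncard_pos]
    exact ⟨0, by simp⟩
  have h0' : (0 : ℝ) < (Set.ncard {x : Fin n → ZMod p | M.mulVec x = 0} : ℝ) := by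
    exact_mod_cast h0
  unfold ldaCovol
  refine ⟨by positivity, ?_⟩
  rw [div_le_iff₀ h0', mul_comm]
  exact_mod_cast lda_card_ker M

/-- If every nonzero lattice vector has squared length at least `R`, so has the minimum. The
defining set of the infimum is nonempty as soon as `n > 0`, because it contains `‖p e₀‖²`. -/
lemma lda_le_minDistSq {m n p : ℕ} [Fact p.Prime] (hn : 0 < n)
    (M : Matrix (Fin m) (Fin n) (ZMod p)) (R : ℝ)
    (h : ∀ x : Fin n → ℤ, x ≠ 0 → M.mulVec (fun j => ((x j : ℤ) : ZMod p)) = 0 →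
      R ≤ ∑ i, ((x i : ℝ)) ^ 2) : R ≤ ldaMinDistSq p M := by
  refine le_csInf ?_ ?_
  · refine ⟨_, fun _ => (p : ℤ), ?_, ?_, rfl⟩
    · intro h0
      have := congrFun h0 ⟨0, hn⟩
      simp [(Fact.out : p.Prime).ne_zero] at this
    · have : (fun _ : Fin n => (((p : ℕ) : ℤ) : ZMod p)) = 0 := by
        ext; simp
      rw [this, Matrix.mulVec_zero]
  · rintro r ⟨x, hx, hM, rfl⟩
    exact h x hx hM

/-- The weight generating function of a box: with weight `w` per nonzero coordinate, the nonzero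
integer vectors of `[-k, k]ⁿ` have total weight `(1 + 2kw)ⁿ - 1`. -/
lemma lda_sum_box (n k : ℕ) (w : ℝ) :
    ∑ x ∈ (Fintype.piFinset fun _ : Fin n => Finset.Icc (-(k : ℤ)) k).erase 0,
      ∏ i, (if x i = 0 then 1 else w) = (1 + 2 * k * w) ^ n - 1 := by
  have h0 : (0 : Fin n → ℤ) ∈ Fintype.piFinset fun _ : Fin n => Finset.Icc (-(k : ℤ)) k := by
    simp [Fintype.mem_piFinset]
  have h1 : ∑ z ∈ Finset.Icc (-(k : ℤ)) k, (if z = 0 then (1 : ℝ) else w) = 1 + 2 * k * w := by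
    have hz : (0 : ℤ) ∈ Finset.Icc (-(k : ℤ)) k := by simp
    rw [← Finset.add_sum_erase _ _ hz, if_pos rfl]
    rw [Finset.sum_congr rfl (g := fun _ => w)
      (fun z hz' => if_neg (Finset.ne_of_mem_erase hz'))]
    rw [Finset.sum_const, Finset.card_erase_of_mem hz, Int.card_Icc]
    have : (((k : ℤ) + 1 - -(k : ℤ)).toNat - 1) = 2 * k := by omega
    rw [this, nsmul_eq_mul]
    push_cast
    ring
  have h2 := Finset.sum_prod_piFinset (ι := Fin n) (Finset.Icc (-(k : ℤ)) k)
    (fun _ z => if z = 0 then (1 : ℝ) else w)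
  rw [← Finset.add_sum_erase _ _ h0] at h2
  simp only [h1, Finset.prod_const, Finset.card_univ, Fintype.card_fin, Pi.zero_apply, if_true,
    one_pow] at h2
  linarith

/-- Union bound over the short vectors. If the expansion exponent `c` is valid for all column sets
of size below `R`, at most a fraction `(1 + 2k p^(-c))ⁿ - 1` of the matrices has a nonzero lattice
vector of squared length below `R`, where `√R ≤ k + 1 ≤ p`: the support of such a vector has fewer
than `R` elements and its coordinates lie in `[-k, k]`, hence stay nonzero mod `p`. -/
lemma lda_card_bad {m n p : ℕ} [Fact p.Prime] (H : Matrix (Fin m) (Fin n) Bool)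
    (c R : ℝ) (k : ℕ) (hkp : k < p) (hR : R ≤ ((k : ℝ) + 1) ^ 2)
    (hexp : ∀ S : Set (Fin n), (S.ncard : ℝ) < R →
      c * (S.ncard : ℝ) ≤ (Set.ncard {i : Fin m | ∃ j ∈ S, H i j = true} : ℝ)) :
    (Set.ncard {M : Matrix (Fin m) (Fin n) (ZMod p) | (∀ i j, H i j = false → M i j = 0) ∧
        ∃ x : Fin n → ℤ, x ≠ 0 ∧ M.mulVec (fun j => ((x j : ℤ) : ZMod p)) = 0 ∧
          ∑ i, ((x i : ℝ)) ^ 2 < R} : ℝ)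
      ≤ (p : ℝ) ^ (Set.ncard {q : Fin m × Fin n | H q.1 q.2 = true}) *
        ((1 + 2 * k * (p : ℝ) ^ (-c)) ^ n - 1) := by
  classical
  have hp1 : 1 ≤ (p : ℝ) := by exact_mod_cast (Fact.out : p.Prime).one_le
  have hp : 0 < (p : ℝ) := by linarith
  set B := (Fintype.piFinset fun _ : Fin n => Finset.Icc (-(k : ℤ)) k).erase 0 with hB
  set A : (Fin n → ℤ) → Set (Matrix (Fin m) (Fin n) (ZMod p)) := fun x =>
    {M | (∀ i j, H i j = false → M i j = 0) ∧ M.mulVec (fun j => ((x j : ℤ) : ZMod p)) = 0} with hA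
  set B' := B.filter (fun x => ∑ i, ((x i : ℝ)) ^ 2 < R) with hB'
  have hsub : {M : Matrix (Fin m) (Fin n) (ZMod p) | (∀ i j, H i j = false → M i j = 0) ∧
        ∃ x : Fin n → ℤ, x ≠ 0 ∧ M.mulVec (fun j => ((x j : ℤ) : ZMod p)) = 0 ∧
          ∑ i, ((x i : ℝ)) ^ 2 < R} ⊆ ⋃ x ∈ B', A x := by
    rintro M ⟨hM, x, hx0, hMx, hxR⟩
    simp only [Set.mem_iUnion]
    refine ⟨x, ?_, hM, hMx⟩
    simp only [hB', hB, Finset.mem_filter, Finset.mem_erase, Fintype.mem_piFinset, Finset.mem_Icc]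
    refine ⟨⟨hx0, fun i => ?_⟩, hxR⟩
    have h1 : (x i : ℝ) ^ 2 ≤ ∑ i, ((x i : ℝ)) ^ 2 :=
      Finset.single_le_sum (f := fun i => (x i : ℝ) ^ 2) (fun i _ => sq_nonneg _)
        (Finset.mem_univ i)
    have h2 : (x i : ℝ) ^ 2 < ((k : ℝ) + 1) ^ 2 := by linarith
    have h3 : (x i) ^ 2 < ((k : ℤ) + 1) ^ 2 := by exact_mod_cast h2
    have h4 := abs_lt_of_sq_lt_sq h3 (by positivity)
    rw [abs_lt] at h4
    constructor <;> omega
  have hterm : ∀ x ∈ B', ((A x).ncard : ℝ) ≤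
      (p : ℝ) ^ (Set.ncard {q : Fin m × Fin n | H q.1 q.2 = true}) *
        ∏ i, (if x i = 0 then 1 else (p : ℝ) ^ (-c)) := by
    intro x hx
    simp only [hB', hB, Finset.mem_filter, Finset.mem_erase, Fintype.mem_piFinset,
      Finset.mem_Icc] at hx
    obtain ⟨⟨hx0, hxk⟩, hxR⟩ := hx
    have hv : ∀ j, ((x j : ℤ) : ZMod p) ≠ 0 ↔ x j ≠ 0 := by
      intro j
      rw [not_iff_not, ZMod.intCast_zmod_eq_zero_iff_dvd]
      constructor
      · intro hd
        refine Int.eq_zero_of_abs_lt_dvd hd ?_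
        have := hxk j
        rw [abs_lt]
        constructor <;> omega
      · intro h; simp [h]
    have h1 := lda_card_annihilator H (fun j => ((x j : ℤ) : ZMod p))
    simp only [hv] at h1
    have hcard : Set.ncard {j | x j ≠ 0} = (Finset.univ.filter fun j => x j ≠ 0).card := by
      rw [← Set.ncard_coe_finset]
      simp
    have hS : (Set.ncard {j | x j ≠ 0} : ℝ) < R := by
      refine lt_of_le_of_lt ?_ hxR
      rw [hcard, Finset.card_filter]
      push_cast
      refine Finset.sum_le_sum fun i _ => ?_
      split_ifs with h
      · have : 1 ≤ (x i) ^ 2 := by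
          have := sq_pos_of_ne_zero (a := x i) (by simpa using h)
          omega
        exact_mod_cast this
      · positivity
    have h2 := hexp _ hS
    have hprod : ∏ i, (if x i = 0 then 1 else (p : ℝ) ^ (-c)) =
        (p : ℝ) ^ (-(c * (Set.ncard {j | x j ≠ 0} : ℝ))) := by
      rw [Finset.prod_ite, Finset.prod_const_one, one_mul, Finset.prod_const, hcard,
        ← Real.rpow_natCast, ← Real.rpow_mul hp.le, neg_mul]
    rw [hprod, Real.rpow_neg hp.le, ← div_eq_mul_inv, le_div_iff₀ (by positivity)]
    have h3 : (p : ℝ) ^ (c * (Set.ncard {j | x j ≠ 0} : ℝ)) ≤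
        (p : ℝ) ^ (Set.ncard {i : Fin m | ∃ j ∈ {j | x j ≠ 0}, H i j = true}) := by
      rw [← Real.rpow_natCast]
      exact Real.rpow_le_rpow_of_exponent_le hp1 h2
    calc ((A x).ncard : ℝ) * _ ≤ ((A x).ncard : ℝ) * _ :=
          mul_le_mul_of_nonneg_left h3 (by positivity)
      _ ≤ _ := by exact_mod_cast h1
  calc _ ≤ ((⋃ x ∈ B', A x).ncard : ℝ) := by
        exact_mod_cast Set.ncard_le_ncard hsub (Set.toFinite _)
    _ ≤ ∑ x ∈ B', ((A x).ncard : ℝ) := by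
        exact_mod_cast Finset.set_ncard_biUnion_le B' A
    _ ≤ ∑ x ∈ B', (p : ℝ) ^ (Set.ncard {q : Fin m × Fin n | H q.1 q.2 = true}) *
        ∏ i, (if x i = 0 then 1 else (p : ℝ) ^ (-c)) := Finset.sum_le_sum hterm
    _ ≤ ∑ x ∈ B, (p : ℝ) ^ (Set.ncard {q : Fin m × Fin n | H q.1 q.2 = true}) *
        ∏ i, (if x i = 0 then 1 else (p : ℝ) ^ (-c)) := by
        refine Finset.sum_le_sum_of_subset_of_nonneg (Finset.filter_subset _ _) ?_
        intro x _ _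
        refine mul_nonneg (by positivity) (Finset.prod_nonneg fun i _ => ?_)
        split_ifs <;> positivity
    _ = _ := by rw [← Finset.mul_sum, lda_sum_box]

/-- The finite-`n` form of the theorem: with `a = m / n` and `R > M₀ p^(2a)`, a lattice without
nonzero vectors of squared length below `R` has gain above `M₀`, because `covol^(2/n) ≤ p^(2a)`. -/
lemma lda_fraction_bounds {m n p : ℕ} [Fact p.Prime] (hn : 0 < n)
    (H : Matrix (Fin m) (Fin n) Bool)
    (a c R M₀ : ℝ) (hM₀ : 0 < M₀) (ha : (m : ℝ) = n * a) (hRM : M₀ * (p : ℝ) ^ (2 * a) < R)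
    (k : ℕ) (hkp : k < p) (hR : R ≤ ((k : ℝ) + 1) ^ 2)
    (hexp : ∀ S : Set (Fin n), (S.ncard : ℝ) < R →
      c * (S.ncard : ℝ) ≤ (Set.ncard {i : Fin m | ∃ j ∈ S, H i j = true} : ℝ)) :
    1 - ((1 + 2 * k * (p : ℝ) ^ (-c)) ^ n - 1) ≤
      (Set.ncard {M : Matrix (Fin m) (Fin n) (ZMod p) |
              (∀ i j, H i j = false → M i j = 0) ∧
              M₀ < ldaMinDistSq p M / (ldaCovol p M) ^ ((2 : ℝ) / n)} : ℝ)
            / (p : ℝ) ^ (Set.ncard {q : Fin m × Fin n | H q.1 q.2 = true}) ∧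
      (Set.ncard {M : Matrix (Fin m) (Fin n) (ZMod p) |
              (∀ i j, H i j = false → M i j = 0) ∧
              M₀ < ldaMinDistSq p M / (ldaCovol p M) ^ ((2 : ℝ) / n)} : ℝ)
            / (p : ℝ) ^ (Set.ncard {q : Fin m × Fin n | H q.1 q.2 = true}) ≤ 1 := by
  have hp : 0 < (p : ℝ) := by exact_mod_cast (Fact.out : p.Prime).pos
  have hn' : 0 < (n : ℝ) := by exact_mod_cast hn
  have hbad := lda_card_bad H c R k hkp hR hexp
  have hall := lda_card_skeleton (p := p) H
  set E := Set.ncard {q : Fin m × Fin n | H q.1 q.2 = true}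
  set G := {M : Matrix (Fin m) (Fin n) (ZMod p) |
              (∀ i j, H i j = false → M i j = 0) ∧
              M₀ < ldaMinDistSq p M / (ldaCovol p M) ^ ((2 : ℝ) / n)}
  set W := {M : Matrix (Fin m) (Fin n) (ZMod p) | (∀ i j, H i j = false → M i j = 0) ∧
        ∃ x : Fin n → ℤ, x ≠ 0 ∧ M.mulVec (fun j => ((x j : ℤ) : ZMod p)) = 0 ∧
          ∑ i, ((x i : ℝ)) ^ 2 < R}
  have hpE : 0 < (p : ℝ) ^ E := by positivity
  have hcov : {M : Matrix (Fin m) (Fin n) (ZMod p) | ∀ i j, H i j = false → M i j = 0} ⊆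
      G ∪ W := by
    intro M hM
    by_cases hW : M ∈ W
    · exact Or.inr hW
    · refine Or.inl ⟨hM, ?_⟩
      have hd : R ≤ ldaMinDistSq p M := by
        refine lda_le_minDistSq hn M R fun x hx hMx => ?_
        by_contra hlt
        exact hW ⟨hM, x, hx, hMx, not_le.mp hlt⟩
      obtain ⟨hc0, hc1⟩ := lda_covol_bound M
      have hc2 : (ldaCovol p M) ^ ((2 : ℝ) / n) ≤ (p : ℝ) ^ (2 * a) := by
        calc (ldaCovol p M) ^ ((2 : ℝ) / n) ≤ ((p : ℝ) ^ m) ^ ((2 : ℝ) / n) :=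
              Real.rpow_le_rpow hc0.le hc1 (by positivity)
          _ = (p : ℝ) ^ (2 * a) := by
              rw [← Real.rpow_natCast, ← Real.rpow_mul hp.le, ha]
              congr 1
              field_simp
      rw [lt_div_iff₀ (by positivity)]
      calc M₀ * (ldaCovol p M) ^ ((2 : ℝ) / n) ≤ M₀ * (p : ℝ) ^ (2 * a) :=
            mul_le_mul_of_nonneg_left hc2 hM₀.le
        _ < R := hRM
        _ ≤ _ := hd
  have hle : p ^ E ≤ G.ncard + W.ncard := by
    rw [← hall]
    exact (Set.ncard_le_ncard hcov (Set.toFinite _)).trans (Set.ncard_union_le _ _)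
  have hle' : (p : ℝ) ^ E ≤ G.ncard + W.ncard := by exact_mod_cast hle
  have hge : G.ncard ≤ p ^ E := by
    rw [← hall]
    exact Set.ncard_le_ncard (fun M hM => hM.1) (Set.toFinite _)
  have hge' : (G.ncard : ℝ) ≤ (p : ℝ) ^ E := by exact_mod_cast hge
  constructor
  · rw [le_div_iff₀ hpE]
    nlinarith
  · rw [div_le_one hpE]
    exact hge'

lemma lda_tendsto_zero (lam : ℝ) (p : ℕ → ℕ)
    (hpn : Tendsto (fun n : ℕ => (p n : ℝ) / (n : ℝ) ^ lam) atTop (nhds 1))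
    (s t : ℝ) (hst : lam * s + t < 0) :
    Tendsto (fun n : ℕ => (p n : ℝ) ^ s * (n : ℝ) ^ t) atTop (nhds 0) := by
  have h1 : Tendsto (fun n : ℕ => ((p n : ℝ) / (n : ℝ) ^ lam) ^ s) atTop (nhds (1 ^ s)) :=
    hpn.rpow_const (Or.inl one_ne_zero)
  have h2 : Tendsto (fun n : ℕ => (n : ℝ) ^ (lam * s + t)) atTop (nhds 0) := by
    have := (tendsto_rpow_neg_atTop (neg_pos.mpr hst)).comp tendsto_natCast_atTop_atTop
    simpa [Function.comp_def] using this
  have h3 := h1.mul h2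
  rw [mul_zero] at h3
  refine h3.congr' ?_
  filter_upwards [eventually_gt_atTop 0] with n hn
  have hn' : 0 < (n : ℝ) := by exact_mod_cast hn
  rw [Real.div_rpow (by positivity) (by positivity), ← Real.rpow_mul hn'.le,
    Real.rpow_add hn']
  have : (n : ℝ) ^ (lam * s) ≠ 0 := by positivity
  field_simp

/-- **Fundamental gain of LDA lattices.**  Fix a rational `R_f ∈ (0,1)`,
`D > 1/(1−R_f) + 2` and `1/(D(1−R_f)−1) < λ < 1/(2(1−R_f))`.  Let `p(n)` be primes with
`p(n)/n^λ → 1`, restrict to `n` with `n(1−R_f) ∈ ℕ` (i.e. `m n = n(1−R_f)`), and let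
`H(n)` be skeleton matrices whose Tanner graphs satisfy `|N(S)| ≥ D(1−R_f)|S|` for all
column sets `S` with `|S| ≤ n/(D+1)`.  Let `ℍ(n)` be the associated random matrix over
`𝔽_{p(n)}` and `Λ_f(n) = {x ∈ ℤⁿ : ℍ(n)x ≡ 0 (mod p(n))}`.  Then for every `M₀ > 0` the
probability that the fundamental gain
`γ(Λ_f(n)) = d_{E,min}(Λ_f(n))² / covol(Λ_f(n))^{2/n}` exceeds `M₀` tends to `1`. -/
theorem lda_fundamental_gain
    (Rf : ℚ) (hRf : 0 < Rf ∧ Rf < 1) (D lam : ℝ)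
    (hD : 1 / (1 - (Rf : ℝ)) + 2 < D)
    (hlam : 1 / (D * (1 - (Rf : ℝ)) - 1) < lam ∧ lam < 1 / (2 * (1 - (Rf : ℝ))))
    (p : ℕ → ℕ) (hp : ∀ n, (p n).Prime)
    (hpn : Tendsto (fun n : ℕ => (p n : ℝ) / (n : ℝ) ^ lam) atTop (nhds 1))
    (m : ℕ → ℕ)
    (H : (n : ℕ) → Matrix (Fin (m n)) (Fin n) Bool)
    (hexp : ∀ n : ℕ, (m n : ℚ) = (n : ℚ) * (1 - Rf) →
      ∀ S : Set (Fin n), (S.ncard : ℝ) ≤ (n : ℝ) / (D + 1) →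
        D * (1 - (Rf : ℝ)) * (S.ncard : ℝ) ≤
          (Set.ncard {i : Fin (m n) | ∃ j ∈ S, H n i j = true} : ℝ)) :
    ∀ M₀ : ℝ, 0 < M₀ →
      Tendsto
        (fun n : ℕ =>
          (Set.ncard {M : Matrix (Fin (m n)) (Fin n) (ZMod (p n)) |
              (∀ i j, H n i j = false → M i j = 0) ∧
              M₀ < ldaMinDistSq (p n) M / (ldaCovol (p n) M) ^ ((2 : ℝ) / n)} : ℝ)
            / (p n : ℝ) ^ (Set.ncard {q : Fin (m n) × Fin n | H n q.1 q.2 = true}))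
        (atTop ⊓ Filter.principal {n : ℕ | (m n : ℚ) = (n : ℚ) * (1 - Rf)}) (nhds 1) := by
  intro M₀ hM₀
  obtain ⟨hRf0, hRf1⟩ := hRf
  have hRf0' : (0 : ℝ) < (Rf : ℝ) := by exact_mod_cast hRf0
  have hRf1' : (Rf : ℝ) < 1 := by exact_mod_cast hRf1
  set a : ℝ := 1 - (Rf : ℝ) with ha
  have ha0 : 0 < a := by linarith
  have ha1 : a < 1 := by linarith
  obtain ⟨hl1, hl2⟩ := hlam
  have hD2 : 2 < D := by
    have : 0 < 1 / a := by positivity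
    linarith
  have hDa : 1 < D * a := by
    have h1 : 1 / a * a = 1 := by field_simp
    nlinarith
  have hlpos : 0 < lam := lt_trans (by apply one_div_pos.mpr; linarith) hl1
  have hl1' : 1 < lam * (D * a - 1) := by
    rwa [div_lt_iff₀ (by linarith)] at hl1
  have hl2' : lam * (2 * a) < 1 := by
    rwa [lt_div_iff₀ (by linarith)] at hl2
  set C : ℝ := Real.sqrt (M₀ + 1) with hC
  have hC0 : 0 < C := Real.sqrt_pos.mpr (by linarith)
  have hC2 : C ^ 2 = M₀ + 1 := Real.sq_sqrt (by linarith)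
  -- The length scale is `√R = C p^a` with `C² = M₀ + 1`. The exponents of `n` in `R / n`,
  -- `√R / p` and `n √R p^(-D a)` are `2aλ - 1`, `(a - 1)λ` and `1 - (D - 1)aλ`, all negative.
  have t1 := (lda_tendsto_zero lam p hpn (2 * a) (-1) (by linarith)).const_mul (C ^ 2)
  have t2 := (lda_tendsto_zero lam p hpn (a - 1) 0 (by nlinarith)).const_mul C
  have t3 := (lda_tendsto_zero lam p hpn (a - D * a) 1 (by nlinarith)).const_mul (2 * C)
  rw [mul_zero] at t1 t2 t3
  have t4 : Tendsto (fun n : ℕ =>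
      1 - (Real.exp (2 * C * ((p n : ℝ) ^ (a - D * a) * (n : ℝ) ^ (1 : ℝ))) - 1))
      atTop (nhds 1) := by
    have := ((Real.continuous_exp.tendsto 0).comp t3).sub_const 1 |>.const_sub 1
    simpa [Function.comp_def] using this
  have hev : ∀ᶠ n in atTop ⊓ Filter.principal {n : ℕ | (m n : ℚ) = (n : ℚ) * (1 - Rf)},
      1 - (Real.exp (2 * C * ((p n : ℝ) ^ (a - D * a) * (n : ℝ) ^ (1 : ℝ))) - 1) ≤
        (Set.ncard {M : Matrix (Fin (m n)) (Fin n) (ZMod (p n)) |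
              (∀ i j, H n i j = false → M i j = 0) ∧
              M₀ < ldaMinDistSq (p n) M / (ldaCovol (p n) M) ^ ((2 : ℝ) / n)} : ℝ)
            / (p n : ℝ) ^ (Set.ncard {q : Fin (m n) × Fin n | H n q.1 q.2 = true}) ∧
        (Set.ncard {M : Matrix (Fin (m n)) (Fin n) (ZMod (p n)) |
              (∀ i j, H n i j = false → M i j = 0) ∧
              M₀ < ldaMinDistSq (p n) M / (ldaCovol (p n) M) ^ ((2 : ℝ) / n)} : ℝ)
            / (p n : ℝ) ^ (Set.ncard {q : Fin (m n) × Fin n | H n q.1 q.2 = true}) ≤ 1 := by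
    rw [eventually_inf_principal]
    filter_upwards [eventually_gt_atTop 0,
      t1.eventually_lt_const (show (0 : ℝ) < 1 / (D + 1) by apply one_div_pos.mpr; linarith),
      t2.eventually_lt_const one_pos] with n hn e1 e2 hmn
    have : Fact (p n).Prime := ⟨hp n⟩
    have hp0 : 0 < (p n : ℝ) := by exact_mod_cast (hp n).pos
    have hn' : 0 < (n : ℝ) := by exact_mod_cast hn
    have hma : (m n : ℝ) = n * a := by
      have : ((m n : ℚ) : ℝ) = (((n : ℚ) * (1 - Rf) : ℚ) : ℝ) := by rw [hmn]
      push_cast at this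
      exact this
    have hk1 := Nat.floor_le (show 0 ≤ C * (p n : ℝ) ^ a by positivity)
    have hk2 := Nat.lt_floor_add_one (C * (p n : ℝ) ^ a)
    set k := ⌊C * (p n : ℝ) ^ a⌋₊ with hk
    have hpp : (p n : ℝ) ^ (2 * a) = ((p n : ℝ) ^ a) ^ 2 := by
      rw [mul_comm, Real.rpow_mul hp0.le]
      norm_num
    have hkp : k < p n := by
      have h1 : C * (p n : ℝ) ^ a < p n := by
        rw [Real.rpow_zero, mul_one, Real.rpow_sub hp0, Real.rpow_one, ← mul_div_assoc,
          div_lt_one hp0] at e2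
        exact e2
      exact_mod_cast hk1.trans_lt h1
    have hb := lda_fraction_bounds hn (H n) a (D * a) (C ^ 2 * (p n : ℝ) ^ (2 * a)) M₀ hM₀ hma
      (by
        have : 0 < (p n : ℝ) ^ (2 * a) := by positivity
        rw [hC2]
        linarith) k hkp
      (by
        rw [hpp, ← mul_pow]
        exact pow_le_pow_left₀ (by positivity) hk2.le 2)
      (by
        intro S hS
        refine hexp n hmn S (hS.le.trans ?_)
        rw [Real.rpow_neg_one, ← mul_assoc, ← div_eq_mul_inv, div_lt_iff₀ hn'] at e1
        rw [div_eq_inv_mul, ← one_div]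
        exact e1.le)
    refine ⟨le_trans ?_ hb.1, hb.2⟩
    have hq : (1 + 2 * k * (p n : ℝ) ^ (-(D * a))) ^ n ≤
        Real.exp (2 * C * ((p n : ℝ) ^ (a - D * a) * (n : ℝ) ^ (1 : ℝ))) := by
      have hw : 0 < (p n : ℝ) ^ (-(D * a)) := by positivity
      calc (1 + 2 * k * (p n : ℝ) ^ (-(D * a))) ^ n
          ≤ (Real.exp (2 * k * (p n : ℝ) ^ (-(D * a)))) ^ n := by
            refine pow_le_pow_left₀ (by positivity) ?_ n
            rw [add_comm]
            exact Real.add_one_le_exp _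
        _ = Real.exp (n * (2 * k * (p n : ℝ) ^ (-(D * a)))) := (Real.exp_nat_mul _ _).symm
        _ ≤ _ := by
            rw [Real.exp_le_exp, sub_eq_add_neg, Real.rpow_add hp0, Real.rpow_one]
            have := mul_le_mul_of_nonneg_right hk1
              (show 0 ≤ 2 * (n : ℝ) * (p n : ℝ) ^ (-(D * a)) by positivity)
            linarith
    linarith
  exact tendsto_of_tendsto_of_tendsto_of_le_of_le' (t4.mono_left inf_le_left)
    tendsto_const_nhds (hev.mono fun n h => h.1) (hev.mono fun n h => h.2)
end
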